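/- For 4/3 < p < 2, the function F_p(s,x) defined above satisfies the partial differential equation (∂F/∂s)(s,x)·x^{2p−4} + (1/2)(∂²F/∂x²)(s,x) = x^{−p} s for all s, x > 0, together with the initial condition F(0,x) = 0 for x > 0. -/

import Mathlib

/-!
Put `a = p / (2(p−1))`, so that `1 < a < 2` and the exponent of `v` in `F_p` is `1 − a`. The
substitution `v = (s / x^{2p−2}) t` gives the self-similar form
`F_p(s,x) = C_p s² x^{4−3p} h(y)`, with `y = (p−1)² s x^{2−2p}` and
`h(y) = ∫_0^1 (1−t)^a t^{1−a} φ(yt) dt` (`Fp_eq_profile`). This trades the singular truncation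
`(s − x^{2p−2}v)_+^a` for a fixed weight, and `h` may be differentiated freely under the integral.
With `θ = y d/dy`, the PDE becomes the ordinary differential equation
`(θ+2)h + 2y(θ+2−a)(θ+3/2)h = 1/C_p`.

The function `φ` is the first of the moments `M_n(v) = ∫_0^∞ λ^n e^{−λ−vλ²/2} dλ`, which satisfy
`M_n' = −M_{n+2}/2`. Integrating two total derivatives in `λ` gives `2v²φ' + (1+3v)φ = 1`
(`moment_ode`). Thanks to this, the integrand of the left side of the equation for `h` equals
`a (1−t)^{a−1} t^{1−a}` plus the `t`-derivative of a term vanishing at `t = 0` and `t = 1`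
(`hasDerivAt_boundaryTerm`). Hence the left side is the constant
`a B(2−a, a) = a(a−1)π / sin(π(a−1))` (`profile_ode`), which is `1/C_p` (`Cp_mul_beta`).
-/

open MeasureTheory Real

/-- `φ(v) = ∫_0^∞ λ e^{−λ} e^{−vλ²/2} dλ`. -/
noncomputable def phiFun (v : ℝ) : ℝ :=
  ∫ l in Set.Ioi (0 : ℝ), l * Real.exp (-l) * Real.exp (-(v / 2) * l ^ 2)

/-- The constant `C_p`. -/
noncomputable def Cp (p : ℝ) : ℝ :=
  (4 * (p - 1) ^ 2 / (π * p * (2 - p))) * Real.sin ((π / 2) * ((2 - p) / (p - 1)))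

/-- The function `F_p(s,x)`. -/
noncomputable def Fp (p s x : ℝ) : ℝ :=
  Cp p * ∫ v in Set.Ioi (0 : ℝ),
    (max (s - x ^ (2 * p - 2) * v) 0) ^ (p / (2 * (p - 1))) *
      v ^ ((p - 2) / (2 * (p - 1))) * phiFun ((p - 1) ^ 2 * v)

open Filter Topology Set

/-! ### The moments of the damped exponential -/

/-- The damped moments `M_n(v) = ∫_0^∞ λ^n e^{−λ} e^{−vλ²/2} dλ`; `φ = M_1`. -/
noncomputable def moment (n : ℕ) (v : ℝ) : ℝ :=
  ∫ l in Ioi (0 : ℝ), l ^ n * Real.exp (-l) * Real.exp (-(v / 2) * l ^ 2)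

theorem phiFun_eq_moment : phiFun = moment 1 := by
  funext v
  simp [phiFun, moment]

theorem integrableOn_pow_mul_exp (n : ℕ) :
    IntegrableOn (fun l : ℝ => l ^ n * Real.exp (-l)) (Ioi 0) := by
  have h := Real.GammaIntegral_convergent (s := n + 1) (by positivity)
  refine h.congr_fun (fun l _ => ?_) measurableSet_Ioi
  simp [mul_comm]

theorem exp_damping_le_one {v l : ℝ} (hv : 0 ≤ v) : Real.exp (-(v / 2) * l ^ 2) ≤ 1 := by
  rw [Real.exp_le_one_iff]
  have := mul_nonneg hv (sq_nonneg l)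
  linarith

theorem integrableOn_moment (n : ℕ) {v : ℝ} (hv : 0 ≤ v) :
    IntegrableOn (fun l : ℝ => l ^ n * Real.exp (-l) * Real.exp (-(v / 2) * l ^ 2)) (Ioi 0) := by
  refine (integrableOn_pow_mul_exp n).mul_bdd (c := 1) (by fun_prop) (ae_of_all _ fun l => ?_)
  rw [Real.norm_eq_abs, Real.abs_exp]
  exact exp_damping_le_one hv

theorem abs_moment_le (n : ℕ) {v : ℝ} (hv : 0 ≤ v) : |moment n v| ≤ moment n 0 := by
  rw [abs_of_nonneg]
  · refine setIntegral_mono_on (integrableOn_moment n hv) (integrableOn_moment n le_rfl)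
      measurableSet_Ioi fun l hl => ?_
    have hl : 0 < l := hl
    have := exp_damping_le_one (l := l) hv
    simp only [zero_div, neg_zero, zero_mul, Real.exp_zero]
    gcongr
  · refine setIntegral_nonneg measurableSet_Ioi fun l hl => ?_
    have hl : 0 < l := hl
    positivity

theorem hasDerivAt_moment (n : ℕ) {v : ℝ} (hv : 0 < v) :
    HasDerivAt (moment n) (-(1 / 2) * moment (n + 2) v) v := by
  have key := hasDerivAt_integral_of_dominated_loc_of_deriv_le
    (μ := volume.restrict (Ioi (0 : ℝ))) (x₀ := v) (s := Ioi 0)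
    (F := fun v l => l ^ n * Real.exp (-l) * Real.exp (-(v / 2) * l ^ 2))
    (F' := fun v l => -(1 / 2) * (l ^ (n + 2) * Real.exp (-l) * Real.exp (-(v / 2) * l ^ 2)))
    (bound := fun l => l ^ (n + 2) * Real.exp (-l))
    (Ioi_mem_nhds hv) (Eventually.of_forall fun v => by fun_prop)
    (integrableOn_moment n hv.le) (by fun_prop) ?_ (integrableOn_pow_mul_exp (n + 2)) ?_
  · have := key.2
    rw [integral_const_mul] at this
    exact this
  · filter_upwards [ae_restrict_mem measurableSet_Ioi] with l hl w hw
    have hl : 0 < l := hl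
    have hw : 0 < w := hw
    have h1 := exp_damping_le_one (l := l) hw.le
    have h2 : 0 < l ^ (n + 2) * Real.exp (-l) := by positivity
    have h3 := Real.exp_pos (-(w / 2) * l ^ 2)
    rw [Real.norm_eq_abs, abs_mul, abs_of_pos (mul_pos h2 h3)]
    have h4 := mul_le_of_le_one_right h2.le h1
    have h5 := mul_pos h2 h3
    norm_num only [abs_neg, abs_of_pos]
    linarith
  · refine ae_of_all _ fun l w _ => ?_
    have h : HasDerivAt (fun w : ℝ => -(w / 2) * l ^ 2) (-(1 / 2) * l ^ 2) w :=
      ((hasDerivAt_id w).div_const 2).neg.mul_const _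
    refine (h.exp.const_mul (l ^ n * Real.exp (-l))).congr_deriv ?_
    ring

theorem continuousOn_moment (n : ℕ) : ContinuousOn (moment n) (Ioi 0) := fun _ hv =>
  (hasDerivAt_moment n hv).continuousAt.continuousWithinAt

theorem tendsto_pow_mul_damped (n : ℕ) {v : ℝ} (hv : 0 ≤ v) :
    Tendsto (fun l : ℝ => l ^ n * Real.exp (-l) * Real.exp (-(v / 2) * l ^ 2)) atTop (𝓝 0) := by
  refine squeeze_zero' ?_ ?_ (Real.tendsto_pow_mul_exp_neg_atTop_nhds_zero n)
  · filter_upwards [eventually_ge_atTop 0] with l hl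
    positivity
  · filter_upwards [eventually_ge_atTop 0] with l hl
    exact mul_le_of_le_one_right (by positivity) (exp_damping_le_one hv)

theorem hasDerivAt_exp_mul_damped (v l : ℝ) :
    HasDerivAt (fun l : ℝ => Real.exp (-l) * Real.exp (-(v / 2) * l ^ 2))
      (-(1 + v * l) * (Real.exp (-l) * Real.exp (-(v / 2) * l ^ 2))) l := by
  have h1 : HasDerivAt (fun l : ℝ => Real.exp (-l)) _ l := (hasDerivAt_id l).neg.exp
  have h2 : HasDerivAt (fun l : ℝ => Real.exp (-(v / 2) * l ^ 2)) _ l :=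
    ((hasDerivAt_pow 2 l).const_mul _).exp
  refine (h1.mul h2).congr_deriv ?_
  simp only [Pi.neg_apply, id]
  push_cast
  ring

/-- Integration of the total derivative of `−(1+λ) e^{−λ − vλ²/2}`. -/
theorem moment_recurrence_one {v : ℝ} (hv : 0 ≤ v) :
    v * (moment 1 v + moment 2 v) = 1 - moment 1 v := by
  have i1 := integrableOn_moment 1 hv
  have i2 := integrableOn_moment 2 hv
  have i := (i1.const_mul (1 + v)).add (i2.const_mul v)
  have h := integral_Ioi_of_hasDerivAt_of_tendsto' (a := 0) (m := 0)
    (f := fun l => -(1 + l) * (Real.exp (-l) * Real.exp (-(v / 2) * l ^ 2)))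
    (fun l _ => ?_) i ?_
  · rw [integral_add' (i1.const_mul (1 + v)) (i2.const_mul v), integral_const_mul,
      integral_const_mul] at h
    change (1 + v) * moment 1 v + v * moment 2 v = _ at h
    norm_num at h
    linarith
  · refine ((((hasDerivAt_id l).const_add 1).neg).mul
      (hasDerivAt_exp_mul_damped v l)).congr_deriv ?_
    simp only [Pi.add_apply, Pi.neg_apply, id]
    ring
  · have := ((tendsto_pow_mul_damped 0 hv).add (tendsto_pow_mul_damped 1 hv)).neg
    simp only [add_zero, neg_zero] at this
    refine this.congr fun l => ?_
    ring

/-- Integration of the total derivative of `−λ² e^{−λ − vλ²/2}`. -/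
theorem moment_recurrence_two {v : ℝ} (hv : 0 ≤ v) :
    v * moment 3 v = 2 * moment 1 v - moment 2 v := by
  have i1 := integrableOn_moment 1 hv
  have i2 := integrableOn_moment 2 hv
  have i3 := integrableOn_moment 3 hv
  have i := ((i1.const_mul (-2)).add i2).add (i3.const_mul v)
  have h := integral_Ioi_of_hasDerivAt_of_tendsto' (a := 0) (m := 0)
    (f := fun l => -l ^ 2 * (Real.exp (-l) * Real.exp (-(v / 2) * l ^ 2)))
    (fun l _ => ?_) i ?_
  · rw [integral_add' ((i1.const_mul (-2)).add i2) (i3.const_mul v),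
      integral_add' (i1.const_mul (-2)) i2, integral_const_mul, integral_const_mul] at h
    change -2 * moment 1 v + moment 2 v + v * moment 3 v = _ at h
    norm_num at h
    linarith
  · refine (((hasDerivAt_pow 2 l).neg).mul
      (hasDerivAt_exp_mul_damped v l)).congr_deriv ?_
    simp only [Pi.add_apply, Pi.neg_apply]
    push_cast
    ring
  · have := (tendsto_pow_mul_damped 2 hv).neg
    simp only [neg_zero] at this
    refine this.congr fun l => ?_
    ring

/-- The first-order equation `2v²φ' + (1 + 3v)φ = 1`, with `φ' = −M_3/2`. -/
theorem moment_ode {v : ℝ} (hv : 0 ≤ v) :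
    v * (3 * moment 1 v - v * moment 3 v) = 1 - moment 1 v := by
  rw [moment_recurrence_two hv, ← moment_recurrence_one hv]
  ring

/-! ### The profile equation -/

theorem integrableOn_beta {c d : ℝ} (hc : 0 ≤ c) (hd : -1 < d) :
    IntegrableOn (fun t : ℝ => (1 - t) ^ c * t ^ d) (Ioo 0 1) := by
  have h : IntegrableOn (fun t : ℝ => t ^ d) (Ioo 0 1) :=
    ((intervalIntegrable_iff_integrableOn_Ioc_of_le zero_le_one).1
      (intervalIntegral.intervalIntegrable_rpow' hd)).mono_set Ioo_subset_Ioc_self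
  refine Integrable.bdd_mul (c := 1) h (by fun_prop) ?_
  filter_upwards [ae_restrict_mem measurableSet_Ioo] with t ht
  have h0 : 0 ≤ 1 - t := by linarith [ht.2]
  rw [Real.norm_eq_abs, abs_of_nonneg (Real.rpow_nonneg h0 c)]
  exact Real.rpow_le_one h0 (by linarith [ht.1]) hc

/-- The value `B(2−a, a) = Γ(2−a)Γ(a) = (a−1)π / sin(π(a−1))`, from the reflection formula;
this is where the sine in the constant `C_p` comes from. -/
theorem integral_beta {a : ℝ} (h1 : 1 < a) (h2 : a < 2) :
    ∫ t in Ioo (0 : ℝ) 1, (1 - t) ^ (a - 1) * t ^ (1 - a)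
      = (a - 1) * (π / Real.sin (π * (a - 1))) := by
  have e : Complex.betaIntegral ((2 - a : ℝ) : ℂ) (a : ℝ)
      = ((∫ t in Ioo (0 : ℝ) 1, (1 - t) ^ (a - 1) * t ^ (1 - a) : ℝ) : ℂ) := by
    rw [Complex.betaIntegral, intervalIntegral.integral_of_le zero_le_one,
      ← integral_Ioc_eq_integral_Ioo, ← integral_complex_ofReal]
    refine setIntegral_congr_fun measurableSet_Ioc fun t ht => ?_
    have h0 : 0 ≤ 1 - t := by linarith [ht.2]
    rw [Complex.ofReal_mul, Complex.ofReal_cpow h0, Complex.ofReal_cpow ht.1.le, mul_comm]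
    push_cast
    congr 2
    ring
  have hb := ProbabilityTheory.beta_eq_betaIntegralReal (2 - a) a (by linarith) (by linarith)
  rw [e, Complex.ofReal_re] at hb
  rw [← hb, ProbabilityTheory.beta, sub_add_cancel, Real.Gamma_two, div_one,
    ← Real.Gamma_mul_Gamma_one_sub]
  have hg := Real.Gamma_add_one (s := a - 1) (by linarith)
  rw [sub_add_cancel] at hg
  rw [hg, show 1 - (a - 1) = 2 - a by ring]
  ring

/-- `∫_0^1 (1−t)^a t^{1−a} t^k M_n(yt) dt`. With `n = 1`, `k = 0` this is the profile `h(y)`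
for which `F_p(s,x) = C_p s² x^{4−3p} h((p−1)² s x^{2−2p})`; the other pairs occur in its
derivatives. -/
noncomputable def profile (a : ℝ) (n k : ℕ) (y : ℝ) : ℝ :=
  ∫ t in Ioo (0 : ℝ) 1, (1 - t) ^ a * t ^ (1 - a) * (t ^ k * moment n (y * t))

theorem aestronglyMeasurable_moment_mul (n k : ℕ) {y : ℝ} (hy : 0 < y) :
    AEStronglyMeasurable (fun t => t ^ k * moment n (y * t))
      (volume.restrict (Ioo (0 : ℝ) 1)) := by
  refine ContinuousOn.aestronglyMeasurable ?_ measurableSet_Ioo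
  refine (continuousOn_id.pow k).mul ((continuousOn_moment n).comp (by fun_prop) fun t ht => ?_)
  exact mul_pos hy ht.1

theorem abs_pow_mul_moment_le (n k : ℕ) {y t : ℝ} (hy : 0 < y) (ht : t ∈ Ioo (0 : ℝ) 1) :
    |t ^ k * moment n (y * t)| ≤ moment n 0 := by
  rw [abs_mul, abs_of_nonneg (pow_nonneg ht.1.le k)]
  refine (mul_le_of_le_one_left (abs_nonneg _) (pow_le_one₀ ht.1.le ht.2.le)).trans ?_
  exact abs_moment_le n (mul_pos hy ht.1).le

theorem integrableOn_profile {a : ℝ} (h1 : 1 < a) (h2 : a < 2) (n k : ℕ) {y : ℝ} (hy : 0 < y) :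
    IntegrableOn (fun t => (1 - t) ^ a * t ^ (1 - a) * (t ^ k * moment n (y * t)))
      (Ioo (0 : ℝ) 1) := by
  refine Integrable.mul_bdd (c := moment n 0)
    (integrableOn_beta (by linarith) (by linarith)) (aestronglyMeasurable_moment_mul n k hy) ?_
  filter_upwards [ae_restrict_mem measurableSet_Ioo] with t ht
  exact abs_pow_mul_moment_le n k hy ht

theorem hasDerivAt_profile {a : ℝ} (h1 : 1 < a) (h2 : a < 2) (n k : ℕ) {y : ℝ} (hy : 0 < y) :
    HasDerivAt (profile a n k) (-(1 / 2) * profile a (n + 2) (k + 1) y) y := by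
  have key := hasDerivAt_integral_of_dominated_loc_of_deriv_le
    (μ := volume.restrict (Ioo (0 : ℝ) 1)) (x₀ := y) (s := Ioi 0)
    (F := fun y t => (1 - t) ^ a * t ^ (1 - a) * (t ^ k * moment n (y * t)))
    (F' := fun y t => -(1 / 2) *
      ((1 - t) ^ a * t ^ (1 - a) * (t ^ (k + 1) * moment (n + 2) (y * t))))
    (bound := fun t => (1 - t) ^ a * t ^ (1 - a) * moment (n + 2) 0)
    (Ioi_mem_nhds hy) ?_ (integrableOn_profile h1 h2 n k hy)
    ((integrableOn_profile h1 h2 (n + 2) (k + 1) hy).const_mul _).aestronglyMeasurable ?_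
    ((integrableOn_beta (by linarith) (by linarith)).mul_const _) ?_
  · have := key.2
    rw [integral_const_mul] at this
    exact this
  · filter_upwards [Ioi_mem_nhds hy] with z hz
    exact (integrableOn_profile h1 h2 n k hz).aestronglyMeasurable
  · filter_upwards [ae_restrict_mem measurableSet_Ioo] with t ht z hz
    have hw : 0 ≤ (1 - t) ^ a * t ^ (1 - a) :=
      mul_nonneg (Real.rpow_nonneg (by linarith [ht.2]) _) (Real.rpow_nonneg ht.1.le _)
    rw [norm_mul, Real.norm_eq_abs ((1 - t) ^ a * t ^ (1 - a) * _), abs_mul, abs_of_nonneg hw]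
    have := mul_le_mul_of_nonneg_left (abs_pow_mul_moment_le (n + 2) (k + 1) hz ht) hw
    have hh : ‖(-(1 / 2) : ℝ)‖ ≤ 1 := by norm_num
    refine (mul_le_of_le_one_left (by positivity) hh).trans this
  · filter_upwards [ae_restrict_mem measurableSet_Ioo] with t ht z hz
    have hm := (hasDerivAt_moment n (mul_pos hz ht.1)).comp z ((hasDerivAt_id z).mul_const t)
    refine ((hm.const_mul (t ^ k)).const_mul _).congr_deriv ?_
    simp only [one_mul]
    ring

/-- The boundary term `(1−t)^a t^{2−a} (y(3φ + 2vφ') + φ)`, `v = yt`, whose total derivative gives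
the equation for the profile. -/
noncomputable def boundaryTerm (a y t : ℝ) : ℝ :=
  (1 - t) ^ a * t ^ (2 - a) *
    (y * (3 * moment 1 (y * t) - y * t * moment 3 (y * t)) + moment 1 (y * t))

/-- The derivative is the integrand of the left side of `profile_ode` minus `a` times the beta
density: `moment_ode` at `v = yt` removes `φ` from the term that lacks the factor `(1−t)^a`. -/
theorem hasDerivAt_boundaryTerm {a y t : ℝ} (hy : 0 < y) (ht : t ∈ Ioo (0 : ℝ) 1) :
    HasDerivAt (boundaryTerm a y)
      ((2 + 3 * y * (2 - a)) * ((1 - t) ^ a * t ^ (1 - a) * (t ^ 0 * moment 1 (y * t)))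
        + (-(1 / 2) * y - y ^ 2 * (9 / 2 - a)) *
          ((1 - t) ^ a * t ^ (1 - a) * (t ^ 1 * moment 3 (y * t)))
        + (y ^ 3 / 2) * ((1 - t) ^ a * t ^ (1 - a) * (t ^ 2 * moment 5 (y * t)))
        - a * ((1 - t) ^ (a - 1) * t ^ (1 - a))) t := by
  have hv : 0 < y * t := mul_pos hy ht.1
  have ht1 : 0 < 1 - t := by linarith [ht.2]
  have hlin : HasDerivAt (fun t => y * t) (y * 1) t := (hasDerivAt_id t).const_mul y
  have hm1 : HasDerivAt (fun t => moment 1 (y * t)) _ t := (hasDerivAt_moment 1 hv).comp t hlin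
  have hm3 : HasDerivAt (fun t => moment 3 (y * t)) _ t := (hasDerivAt_moment 3 hv).comp t hlin
  have hw1 : HasDerivAt (fun t : ℝ => (1 - t) ^ a) _ t :=
    ((hasDerivAt_id t).const_sub 1).rpow_const (p := a) (Or.inl ht1.ne')
  have hw2 : HasDerivAt (fun t : ℝ => t ^ (2 - a)) _ t :=
    Real.hasDerivAt_rpow_const (p := 2 - a) (Or.inl ht.1.ne')
  have h := (hw1.mul hw2).mul
    ((((hm1.const_mul 3).sub (hlin.mul hm3)).const_mul y).add hm1)
  refine h.congr_deriv ?_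
  simp only [Pi.mul_apply, Pi.sub_apply, Pi.add_apply, id]
  have e1 : (1 - t) ^ a = (1 - t) ^ (a - 1) * (1 - t) := by
    rw [← Real.rpow_add_one ht1.ne', sub_add_cancel]
  have e2 : t ^ (2 - a) = t ^ (1 - a) * t := by
    rw [← Real.rpow_add_one ht.1.ne']; congr 1; ring
  have e3 : t ^ (2 - a - 1) = t ^ (1 - a) := by congr 1; ring
  have ode := moment_ode hv.le
  rw [e1, e2, e3]
  generalize (1 - t) ^ (a - 1) = A
  generalize t ^ (1 - a) = B
  norm_num only
  linear_combination (-a * A * B) * ode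

theorem tendsto_boundaryTerm {a y : ℝ} (hy : 0 < y) {l : Filter ℝ}
    (hl : ∀ᶠ t in l, t ∈ Ioo (0 : ℝ) 1)
    (h : Tendsto (fun t : ℝ => (1 - t) ^ a * t ^ (2 - a)) l (𝓝 0)) :
    Tendsto (boundaryTerm a y) l (𝓝 0) := by
  refine h.zero_mul_isBoundedUnder_le ?_
  refine ⟨y * (3 * moment 1 0 + y * moment 3 0) + moment 1 0, ?_⟩
  rw [eventually_map]
  filter_upwards [hl] with t ht
  have b1 := abs_le.1 (abs_moment_le 1 (mul_pos hy ht.1).le)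
  have b3 := abs_le.1 (abs_pow_mul_moment_le 3 1 hy ht)
  rw [pow_one] at b3
  simp only [Function.comp, Real.norm_eq_abs]
  have c1 := mul_le_mul_of_nonneg_left b1.1 hy.le
  have c2 := mul_le_mul_of_nonneg_left b1.2 hy.le
  have c3 := mul_le_mul_of_nonneg_left b3.1 (mul_pos hy hy).le
  have c4 := mul_le_mul_of_nonneg_left b3.2 (mul_pos hy hy).le
  rw [abs_le]
  constructor <;> linarith

/-- The profile equation `(θ+2)h + 2y(θ+2−a)(θ+3/2)h = a·B(2−a, a)`, `θ = y d/dy`, written out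
with `h' = −profile a 3 1 / 2` and `h'' = profile a 5 2 / 4`. -/
theorem profile_ode {a : ℝ} (h1 : 1 < a) (h2 : a < 2) {y : ℝ} (hy : 0 < y) :
    (2 + 3 * y * (2 - a)) * profile a 1 0 y
        + (-(1 / 2) * y - y ^ 2 * (9 / 2 - a)) * profile a 3 1 y
        + (y ^ 3 / 2) * profile a 5 2 y
      = a * ((a - 1) * (π / Real.sin (π * (a - 1)))) := by
  have i1 := (integrableOn_profile h1 h2 1 0 hy).const_mul (2 + 3 * y * (2 - a))
  have i3 := (integrableOn_profile h1 h2 3 1 hy).const_mul (-(1 / 2) * y - y ^ 2 * (9 / 2 - a))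
  have i5 := (integrableOn_profile h1 h2 5 2 hy).const_mul (y ^ 3 / 2)
  have ib := (integrableOn_beta (c := a - 1) (d := 1 - a)
    (by linarith) (by linarith)).const_mul a
  have i := ((i1.add i3).add i5).sub ib
  have key := intervalIntegral.integral_eq_sub_of_hasDerivAt_of_tendsto (fa := 0) (fb := 0)
    (zero_lt_one' ℝ) (fun t ht => hasDerivAt_boundaryTerm (a := a) hy ht)
    ((intervalIntegrable_iff_integrableOn_Ioo_of_le zero_le_one).2 i)
    (tendsto_boundaryTerm hy (Ioo_mem_nhdsGT zero_lt_one) ?_)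
    (tendsto_boundaryTerm hy (Ioo_mem_nhdsLT zero_lt_one) ?_)
  · rw [intervalIntegral.integral_of_le zero_le_one, integral_Ioc_eq_integral_Ioo] at key
    have e := integral_sub' ((i1.add i3).add i5) ib
    rw [integral_add' (i1.add i3) i5, integral_add' i1 i3, integral_const_mul, integral_const_mul,
      integral_const_mul, integral_const_mul, integral_beta h1 h2] at e
    have e' := e.symm.trans key
    change _ * profile a 1 0 y + _ * profile a 3 1 y + _ * profile a 5 2 y - _ = _ at e'
    linarith
  · have c : ContinuousAt (fun t : ℝ => (1 - t) ^ a * t ^ (2 - a)) 0 :=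
      ((continuousAt_const.sub continuousAt_id).rpow_const (Or.inr (by linarith))).mul
        (continuousAt_id.rpow_const (Or.inr (by linarith)))
    have := c.tendsto
    simp only [Real.zero_rpow (show 2 - a ≠ 0 by linarith), mul_zero] at this
    exact this.mono_left nhdsWithin_le_nhds
  · have c : ContinuousAt (fun t : ℝ => (1 - t) ^ a * t ^ (2 - a)) 1 :=
      ((continuousAt_const.sub continuousAt_id).rpow_const (Or.inr (by linarith))).mul
        (continuousAt_id.rpow_const (Or.inr (by linarith)))
    have := c.tendsto
    simp only [sub_self, Real.zero_rpow (show a ≠ 0 by linarith), zero_mul] at this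
    exact this.mono_left nhdsWithin_le_nhds

/-! ### Self-similarity and the PDE -/

/-- Substituting `v = (s / x^{2p−2}) t` exhibits the self-similar form of `F_p`. -/
theorem Fp_eq_profile {p s x : ℝ} (hp1 : 4 / 3 < p) (hs : 0 < s) (hx : 0 < x) :
    Fp p s x = Cp p * (s ^ 2 * x ^ (4 - 3 * p) *
      profile (p / (2 * (p - 1))) 1 0 ((p - 1) ^ 2 * s * x ^ (2 - 2 * p))) := by
  have hp : p - 1 ≠ 0 := by linarith
  have ha0 : p / (2 * (p - 1)) ≠ 0 := by
    have : 0 < p / (2 * (p - 1)) := div_pos (by linarith) (by linarith)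
    exact this.ne'
  have hb : (p - 2) / (2 * (p - 1)) = 1 - p / (2 * (p - 1)) := by field_simp; ring
  have hm : 4 - 3 * p = (2 * p - 2) * (p / (2 * (p - 1)) - 2) := by field_simp; ring
  rw [Fp, hb, hm, Real.rpow_mul hx.le, show 2 - 2 * p = -(2 * p - 2) by ring,
    Real.rpow_neg hx.le]
  generalize p / (2 * (p - 1)) = a at *
  have hr : 0 < x ^ (2 * p - 2) := Real.rpow_pos_of_pos hx _
  generalize x ^ (2 * p - 2) = r at *
  generalize (p - 1) ^ 2 = κ
  congr 1
  have hsr : 0 < s / r := div_pos hs hr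
  have sub := integral_comp_mul_left_Ioi'
    (fun v => (max (s - r * v) 0) ^ a * v ^ (1 - a) * phiFun (κ * v)) 0 hsr
  rw [mul_zero] at sub
  rw [← sub, smul_eq_mul, setIntegral_eq_of_subset_of_forall_sdiff_eq_zero measurableSet_Ioi
    (s := Ioo (0 : ℝ) 1) (fun t ht => ht.1), profile, ← integral_const_mul, ← integral_const_mul]
  · refine setIntegral_congr_fun measurableSet_Ioo fun t ht => ?_
    have h1t : 0 < 1 - t := by linarith [ht.2]
    have e1 : s - r * (s / r * t) = s * (1 - t) := by field_simp
    have e2 : r ^ (a - 2) = r ^ (a - 1) * r⁻¹ := by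
      rw [← Real.rpow_neg_one, ← Real.rpow_add hr]; congr 1; ring
    have e3 : r ^ (1 - a) = (r ^ (a - 1))⁻¹ := by rw [← Real.rpow_neg hr.le]; congr 1; ring
    have e4 : s ^ (1 - a) = (s ^ a)⁻¹ * s := by
      rw [← Real.rpow_neg hs.le, ← Real.rpow_add_one hs.ne']; congr 1; ring
    have h5 : s ^ a ≠ 0 := (Real.rpow_pos_of_pos hs a).ne'
    have h6 : r ^ (a - 1) ≠ 0 := (Real.rpow_pos_of_pos hr _).ne'
    simp only [e1]
    rw [max_eq_left (mul_pos hs h1t).le, Real.mul_rpow hs.le h1t.le,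
      Real.mul_rpow hsr.le ht.1.le, Real.div_rpow hs.le hr.le, phiFun_eq_moment,
      show κ * (s / r * t) = κ * s * r⁻¹ * t by ring, e2, e3, e4]
    field_simp
  · intro t ht
    have h1t : 1 ≤ t := by
      by_contra h
      exact ht.2 ⟨ht.1, not_le.1 h⟩
    have e1 : s - r * (s / r * t) = s * (1 - t) := by field_simp
    rw [e1, max_eq_right (mul_nonpos_of_nonneg_of_nonpos hs.le (by linarith)),
      Real.zero_rpow ha0]
    ring

/-- The normalisation `C_p · a·B(2−a, a) = 1` for `a = p / (2(p−1))`. -/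
theorem Cp_mul_beta {p : ℝ} (hp1 : 4 / 3 < p) (hp2 : p < 2) :
    Cp p * (p / (2 * (p - 1)) * ((p / (2 * (p - 1)) - 1) *
      (π / Real.sin (π * (p / (2 * (p - 1)) - 1))))) = 1 := by
  have hp : 0 < p - 1 := by linarith
  have e : p / (2 * (p - 1)) - 1 = (2 - p) / (2 * (p - 1)) := by field_simp; ring
  have e2 : π / 2 * ((2 - p) / (p - 1)) = π * ((2 - p) / (2 * (p - 1))) := by field_simp
  have hsin : 0 < Real.sin (π * ((2 - p) / (2 * (p - 1)))) := by
    apply Real.sin_pos_of_pos_of_lt_pi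
    · exact mul_pos Real.pi_pos (div_pos (by linarith) (by linarith))
    · refine mul_lt_of_lt_one_right Real.pi_pos ?_
      rw [div_lt_one (by linarith)]
      linarith
  rw [Cp, e, e2]
  generalize Real.sin _ = S at *
  have h1 : (2 - p) ≠ 0 := by linarith
  have h2 : p ≠ 0 := by linarith
  have h3 := Real.pi_ne_zero
  field_simp
  norm_num

/-- `F_p` satisfies the PDE `∂_s F · x^{2p−4} + (1/2) ∂²_{xx} F = x^{−p} s`
with initial condition `F(0,x) = 0`. -/
theorem Fp_pde (p : ℝ) (hp1 : 4 / 3 < p) (hp2 : p < 2) :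
    (∀ s x : ℝ, 0 < s → 0 < x →
        deriv (fun s' => Fp p s' x) s * x ^ (2 * p - 4)
            + (1 / 2) * deriv (deriv (fun x' => Fp p s x')) x
          = x ^ (-p) * s) ∧
      ∀ x : ℝ, 0 < x → Fp p 0 x = 0 := by
  have hp : 0 < p - 1 := by linarith
  refine ⟨fun s x hs hx => ?_, fun x hx => ?_⟩
  · have hC := Cp_mul_beta hp1 hp2
    have h1 : 1 < p / (2 * (p - 1)) := by rw [lt_div_iff₀ (by linarith)]; linarith
    have h2 : p / (2 * (p - 1)) < 2 := by rw [div_lt_iff₀ (by linarith)]; linarith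
    have hap : p / (2 * (p - 1)) * (2 * (p - 1)) = p := by field_simp
    have hF : ∀ s x : ℝ, 0 < s → 0 < x → Fp p s x = Cp p * (s ^ 2 * x ^ (4 - 3 * p) *
        profile (p / (2 * (p - 1))) 1 0 ((p - 1) ^ 2 * s * x ^ (2 - 2 * p))) :=
      fun s x hs hx => Fp_eq_profile hp1 hs hx
    generalize p / (2 * (p - 1)) = a at *
    have hypos : ∀ s x : ℝ, 0 < s → 0 < x → 0 < (p - 1) ^ 2 * s * x ^ (2 - 2 * p) :=
      fun s x hs hx => mul_pos (mul_pos (by positivity) hs) (Real.rpow_pos_of_pos hx _)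
    have ds : deriv (fun s' => Fp p s' x) s = Cp p * (x ^ (4 - 3 * p) *
        (2 * s * profile a 1 0 ((p - 1) ^ 2 * s * x ^ (2 - 2 * p))
          - s ^ 2 * ((p - 1) ^ 2 * x ^ (2 - 2 * p)) / 2 *
            profile a 3 1 ((p - 1) ^ 2 * s * x ^ (2 - 2 * p)))) := by
      have ev : (fun s' => Fp p s' x) =ᶠ[𝓝 s] fun s' => Cp p * (s' ^ 2 * x ^ (4 - 3 * p) *
          profile a 1 0 ((p - 1) ^ 2 * s' * x ^ (2 - 2 * p))) := by
        filter_upwards [Ioi_mem_nhds hs] with s' hs'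
        exact hF s' x hs' hx
      rw [ev.deriv_eq]
      have hy : HasDerivAt (fun s' => (p - 1) ^ 2 * s' * x ^ (2 - 2 * p))
          ((p - 1) ^ 2 * 1 * x ^ (2 - 2 * p)) s :=
        ((hasDerivAt_id s).const_mul _).mul_const _
      have hh : HasDerivAt (fun s' => profile a 1 0 ((p - 1) ^ 2 * s' * x ^ (2 - 2 * p))) _ s :=
        HasDerivAt.comp (h₂ := profile a 1 0) s (hasDerivAt_profile h1 h2 1 0 (hypos s x hs hx)) hy
      have h := ((((hasDerivAt_pow 2 s).mul_const (x ^ (4 - 3 * p))).mul hh).const_mul (Cp p))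
      refine h.deriv.trans ?_
      norm_num only
      ring
    -- Derivatives of powers are written as `c * x ^ c / x`, so that the only real powers of `x`
    -- that occur are `x ^ (4 - 3p)` and `x ^ (2 - 2p)`.
    have hpow : ∀ (c x : ℝ), 0 < x → HasDerivAt (fun x : ℝ => x ^ c) (c * x ^ c / x) x := by
      intro c x hx
      refine (Real.hasDerivAt_rpow_const (p := c) (Or.inl hx.ne')).congr_deriv ?_
      rw [Real.rpow_sub_one hx.ne', mul_div_assoc]
    have hy : ∀ x : ℝ, 0 < x → HasDerivAt (fun x => (p - 1) ^ 2 * s * x ^ (2 - 2 * p))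
        ((p - 1) ^ 2 * s * ((2 - 2 * p) * x ^ (2 - 2 * p) / x)) x :=
      fun x hx => (hpow _ x hx).const_mul _
    have hh : ∀ (n k : ℕ) (x : ℝ), 0 < x → HasDerivAt
        (fun x => profile a n k ((p - 1) ^ 2 * s * x ^ (2 - 2 * p)))
        (-(1 / 2) * profile a (n + 2) (k + 1) ((p - 1) ^ 2 * s * x ^ (2 - 2 * p)) *
          ((p - 1) ^ 2 * s * ((2 - 2 * p) * x ^ (2 - 2 * p) / x))) x :=
      fun n k x hx => HasDerivAt.comp (h₂ := profile a n k) x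
        (hasDerivAt_profile h1 h2 n k (hypos s x hs hx)) (hy x hx)
    have dx : ∀ x : ℝ, 0 < x → deriv (fun x' => Fp p s x') x = Cp p * s ^ 2 *
        (x ^ (4 - 3 * p) / x * ((4 - 3 * p) * profile a 1 0 ((p - 1) ^ 2 * s * x ^ (2 - 2 * p))
          + (p - 1) ^ 3 * s * (x ^ (2 - 2 * p) *
            profile a 3 1 ((p - 1) ^ 2 * s * x ^ (2 - 2 * p))))) := by
      intro x hx
      have ev : (fun x' => Fp p s x') =ᶠ[𝓝 x] fun x' => Cp p * (s ^ 2 * x' ^ (4 - 3 * p) *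
          profile a 1 0 ((p - 1) ^ 2 * s * x' ^ (2 - 2 * p))) := by
        filter_upwards [Ioi_mem_nhds hx] with x' hx'
        exact hF s x' hs hx'
      rw [ev.deriv_eq]
      have h := ((((hpow (4 - 3 * p) x hx).const_mul (s ^ 2)).mul (hh 1 0 x hx)).const_mul (Cp p))
      refine h.deriv.trans ?_
      norm_num only
      ring
    have dxx : deriv (deriv (fun x' => Fp p s x')) x = Cp p * s ^ 2 * (x ^ (4 - 3 * p) / x ^ 2 *
        ((3 - 3 * p) * ((4 - 3 * p) * profile a 1 0 ((p - 1) ^ 2 * s * x ^ (2 - 2 * p))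
          + (p - 1) ^ 3 * s * (x ^ (2 - 2 * p) *
            profile a 3 1 ((p - 1) ^ 2 * s * x ^ (2 - 2 * p))))
        + (4 - 3 * p) * (p - 1) ^ 3 * s * (x ^ (2 - 2 * p) *
            profile a 3 1 ((p - 1) ^ 2 * s * x ^ (2 - 2 * p)))
        + (p - 1) ^ 3 * s * ((2 - 2 * p) * x ^ (2 - 2 * p) *
              profile a 3 1 ((p - 1) ^ 2 * s * x ^ (2 - 2 * p))
            + (p - 1) ^ 3 * s * (x ^ (2 - 2 * p)) ^ 2 *
              profile a 5 2 ((p - 1) ^ 2 * s * x ^ (2 - 2 * p))))) := by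
      have ev : deriv (fun x' => Fp p s x') =ᶠ[𝓝 x] _ :=
        Filter.eventuallyEq_of_mem (Ioi_mem_nhds hx) dx
      rw [ev.deriv_eq]
      have h := (((hpow (4 - 3 * p) x hx).div (hasDerivAt_id x) hx.ne').mul
        (((hh 1 0 x hx).const_mul (4 - 3 * p)).add
          (((hpow (2 - 2 * p) x hx).mul (hh 3 1 x hx)).const_mul ((p - 1) ^ 3 * s)))).const_mul
          (Cp p * s ^ 2)
      refine h.deriv.trans ?_
      simp only [Pi.add_apply, Pi.mul_apply, Pi.div_apply, id]
      norm_num only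
      field_simp
      ring
    have ode := profile_ode h1 h2 (hypos s x hs hx)
    have hY : 0 < x ^ (2 - 2 * p) := Real.rpow_pos_of_pos hx _
    have e1 : x ^ (2 * p - 4) = 1 / (x ^ (2 - 2 * p) * x ^ 2) := by
      rw [← Real.rpow_natCast x 2, ← Real.rpow_add hx, one_div, ← Real.rpow_neg hx.le]
      congr 1; push_cast; ring
    have e2 : x ^ (-p) = x ^ (4 - 3 * p) / (x ^ (2 - 2 * p) * x ^ 2) := by
      rw [← Real.rpow_natCast x 2, ← Real.rpow_add hx, ← Real.rpow_sub hx]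
      congr 1; push_cast; ring
    rw [ds, dxx, e1, e2]
    generalize x ^ (2 - 2 * p) = Y at *
    generalize x ^ (4 - 3 * p) = Z at *
    generalize profile a 1 0 _ = A at *
    generalize profile a 3 1 _ = B at *
    generalize profile a 5 2 _ = D at *
    rw [← ode] at hC
    generalize Cp p = C at *
    -- The parameter `a` enters the equation only through `(p - 1)² a`.
    have hq : (p - 1) ^ 2 * a = (p - 1) * p / 2 := by linear_combination (p - 1) / 2 * hap
    -- `w` is `x ^ (-p)`; with it every remaining power of `x` cancels.
    obtain ⟨w, rfl⟩ : ∃ w, Z = w * (Y * x ^ 2) := ⟨Z / (Y * x ^ 2), by field_simp⟩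
    have f1 : w * (Y * x ^ 2) * (1 / (Y * x ^ 2)) = w := by field_simp
    have f2 : w * (Y * x ^ 2) / x ^ 2 = w * Y := by field_simp
    have f3 : w * (Y * x ^ 2) / (Y * x ^ 2) = w := by field_simp
    rw [f2, f3]
    linear_combination
      C * (2 * s * A - s ^ 2 * ((p - 1) ^ 2 * Y) / 2 * B) * f1 + s * w * hC
        - s * w * C * (-3 * s * Y * A + s ^ 2 * Y ^ 2 * (p - 1) ^ 2 * B) * hq
  · rw [Fp]
    have ha : p / (2 * (p - 1)) ≠ 0 := (div_pos (by linarith) (by linarith)).ne'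
    rw [setIntegral_congr_fun (g := fun _ => (0 : ℝ)) measurableSet_Ioi fun v hv => ?_]
    · simp
    · have hv : 0 < v := hv
      have hr := Real.rpow_pos_of_pos hx (2 * p - 2)
      have : max (0 - x ^ (2 * p - 2) * v) 0 = 0 :=
        max_eq_right (by linarith [mul_pos hr hv])
      simp only [this, Real.zero_rpow ha, zero_mul]
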